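/- For real numbers 0 < a ≤ b < 1 with a + b ≤ 1, real q ∈ (1, 2), and any real x with |x| ≥ a, we have a·|x/a + 1|^q + b·|x/b − 1|^q − (a + b) ≥ (q − 1)·|x|^q / 3. -/

import Mathlib

/-!
Put `p = q - 1` and `t = x / a`. Everything comes from the tangent lines of the convex function
`v ↦ v ^ q`. The line at `1` bounds the `b`-term below by `b - q * x`, so its linear part cancels
that of the `a`-term, and it remains to improve Bernoulli's inequality to
`1 + q * t + p / 3 * |t| ^ q ≤ |1 + t| ^ q` for `1 ≤ |t|`. Here `|1 + t| ^ q` is split with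
weights `p / 3` and `1 - p / 3`: the first part is bounded by the tangent line at `|t|`, which
produces the term `p / 3 * |t| ^ q`; the second by the tangent line at `2` if `t` is positive,
and by `0` if `t` is negative. Finally `|x| ^ q ≤ a * |x / a| ^ q`, because `a ^ q ≤ a`.
-/

section TangentLines

variable {q : ℝ}

lemma rpow_add_mul_sub_le_rpow {u v : ℝ} (hq : 1 ≤ q) (hu : 0 < u) (hv : 0 ≤ v) :
    u ^ q + q * u ^ (q - 1) * (v - u) ≤ v ^ q := by
  have bernoulli : 1 + q * (v / u - 1) ≤ (v / u) ^ q := by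
    simpa only [add_sub_cancel] using
      one_add_mul_self_le_rpow_one_add (s := v / u - 1) (by linarith [div_nonneg hv hu.le]) hq
  calc u ^ q + q * u ^ (q - 1) * (v - u)
      = u ^ q * (1 + q * (v / u - 1)) := by
        rw [Real.rpow_sub_one hu.ne']
        field_simp
    _ ≤ u ^ q * (v / u) ^ q := by gcongr
    _ = v ^ q := by rw [← Real.mul_rpow hu.le (div_nonneg hv hu.le), mul_div_cancel₀ v hu.ne']

lemma one_add_mul_le_abs_one_add_rpow (hq : 1 ≤ q) (s : ℝ) : 1 + q * s ≤ |1 + s| ^ q := by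
  have tangent_at_one : 1 + q * (|1 + s| - 1) ≤ |1 + s| ^ q := by
    simpa using rpow_add_mul_sub_le_rpow hq one_pos (abs_nonneg (1 + s))
  have linear_part_le : q * s ≤ q * (|1 + s| - 1) := by
    gcongr
    linarith [le_abs_self (1 + s)]
  linarith

lemma sub_mul_le_mul_abs_div_sub_one_rpow {b : ℝ} (hq : 1 ≤ q) (hb : 0 < b) (x : ℝ) :
    b - q * x ≤ b * |x / b - 1| ^ q := by
  calc b - q * x = b * (1 + q * -(x / b)) := by field_simp; ring
    _ ≤ b * |1 + -(x / b)| ^ q := by gcongr; exact one_add_mul_le_abs_one_add_rpow hq _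
    _ = b * |x / b - 1| ^ q := by rw [← sub_eq_add_neg, abs_sub_comm]

end TangentLines

section ImprovedBernoulli

variable {q : ℝ}

lemma quadratic_log_le_rpow {x p : ℝ} (hx : 1 ≤ x) (hp : 0 ≤ p) :
    1 + Real.log x * p + (Real.log x * p) ^ 2 / 2 ≤ x ^ p := by
  rw [Real.rpow_def_of_pos (by linarith)]
  exact Real.quadratic_le_exp_of_nonneg (mul_nonneg (Real.log_nonneg hx) hp)

lemma one_add_sub_sq_le_mul_two_rpow {p : ℝ} (hp₀ : 0 ≤ p) (hp₁ : p ≤ 1) :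
    1 + p / 3 - p ^ 2 / 6 ≤ (1 - p / 3) * 2 ^ p := by
  have two_thirds_le_log_two : 2 / 3 ≤ Real.log 2 := by linarith [Real.log_two_gt_d9]
  have two_rpow_ge : 1 + 2 / 3 * p + (2 / 3 * p) ^ 2 / 2 ≤ (2 : ℝ) ^ p :=
    le_trans (by gcongr) (quadratic_log_le_rpow one_le_two hp₀)
  calc 1 + p / 3 - p ^ 2 / 6
      ≤ (1 - p / 3) * (1 + 2 / 3 * p + (2 / 3 * p) ^ 2 / 2) := by
        nlinarith [mul_nonneg (sq_nonneg p) (sub_nonneg.2 hp₁), sq_nonneg p]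
    _ ≤ (1 - p / 3) * 2 ^ p := mul_le_mul_of_nonneg_left two_rpow_ge (by linarith)

lemma one_add_mul_add_rpow_le_one_add_rpow {t : ℝ} (hq₁ : 1 ≤ q) (hq₂ : q ≤ 2) (ht : 1 ≤ t) :
    1 + q * t + (q - 1) / 3 * t ^ q ≤ (1 + t) ^ q := by
  have tangent_at_t : t ^ q + q ≤ (1 + t) ^ q := by
    have tangent := rpow_add_mul_sub_le_rpow (u := t) (v := 1 + t) hq₁ (by linarith) (by linarith)
    have slope_ge : q * 1 ≤ q * t ^ (q - 1) := by
      gcongr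
      exact Real.one_le_rpow ht (by linarith)
    linarith
  have tangent_at_two : 2 ^ (q - 1) * (2 + q * (t - 1)) ≤ (1 + t) ^ q := by
    have tangent := rpow_add_mul_sub_le_rpow (u := 2) (v := 1 + t) hq₁ two_pos (by linarith)
    have two_rpow : (2 : ℝ) ^ q = 2 ^ (q - 1) * 2 := by
      rw [Real.rpow_sub_one two_ne_zero, div_mul_cancel₀ _ two_ne_zero]
    linarith
  have coeff : 1 + (q - 1) / 3 - (q - 1) ^ 2 / 6 ≤ (1 - (q - 1) / 3) * 2 ^ (q - 1) :=
    one_add_sub_sq_le_mul_two_rpow (by linarith) (by linarith)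
  have at_two : 1 + q * t - (q - 1) / 3 * q ≤ (1 - (q - 1) / 3) * (1 + t) ^ q := by
    calc 1 + q * t - (q - 1) / 3 * q
        ≤ (1 + (q - 1) / 3 - (q - 1) ^ 2 / 6) * (2 + q * (t - 1)) := by
          have excess_nonneg : 0 ≤ ((q - 1) / 3 - (q - 1) ^ 2 / 6) * (q * (t - 1)) :=
            mul_nonneg (by nlinarith) (mul_nonneg (by linarith) (by linarith))
          linarith
      _ ≤ (1 - (q - 1) / 3) * 2 ^ (q - 1) * (2 + q * (t - 1)) :=
          mul_le_mul_of_nonneg_right coeff (by nlinarith)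
      _ ≤ (1 - (q - 1) / 3) * (1 + t) ^ q := by
          rw [mul_assoc]
          exact mul_le_mul_of_nonneg_left tangent_at_two (by linarith)
  have at_t : (q - 1) / 3 * (t ^ q + q) ≤ (q - 1) / 3 * (1 + t) ^ q :=
    mul_le_mul_of_nonneg_left tangent_at_t (by linarith)
  linarith

lemma one_sub_mul_add_rpow_le_sub_one_rpow {s : ℝ} (hq₁ : 1 ≤ q) (hq₂ : q ≤ 2) (hs : 1 ≤ s) :
    1 - q * s + (q - 1) / 3 * s ^ q ≤ (s - 1) ^ q := by
  have tangent_at_s : s ^ q - q * s ≤ (s - 1) ^ q := by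
    have tangent := rpow_add_mul_sub_le_rpow (u := s) (v := s - 1) hq₁ (by linarith) (by linarith)
    have slope_le : q * s ^ (q - 1) ≤ q * s := by
      gcongr
      exact Real.rpow_le_self_of_one_le hs (by linarith)
    linarith
  have at_s : (q - 1) / 3 * (s ^ q - q * s) ≤ (q - 1) / 3 * (s - 1) ^ q :=
    mul_le_mul_of_nonneg_left tangent_at_s (by linarith)
  have at_zero : 0 ≤ (1 - (q - 1) / 3) * (s - 1) ^ q :=
    mul_nonneg (by linarith) (Real.rpow_nonneg (by linarith) q)
  have linear_part : 1 ≤ (1 - (q - 1) / 3) * (q * s) := by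
    calc 1 ≤ (1 - (q - 1) / 3) * q := by nlinarith
      _ ≤ (1 - (q - 1) / 3) * (q * s) :=
        mul_le_mul_of_nonneg_left (le_mul_of_one_le_right (by linarith) hs) (by linarith)
  linarith

lemma one_add_mul_add_abs_rpow_le_abs_one_add_rpow {t : ℝ} (hq₁ : 1 ≤ q) (hq₂ : q ≤ 2)
    (ht : 1 ≤ |t|) : 1 + q * t + (q - 1) / 3 * |t| ^ q ≤ |1 + t| ^ q := by
  rcases le_abs.1 ht with ht_pos | ht_neg
  · rw [abs_of_pos (by linarith), abs_of_pos (by linarith)]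
    exact one_add_mul_add_rpow_le_one_add_rpow hq₁ hq₂ ht_pos
  · rw [abs_of_neg (by linarith : t < 0), abs_of_nonpos (by linarith : 1 + t ≤ 0)]
    convert one_sub_mul_add_rpow_le_sub_one_rpow hq₁ hq₂ ht_neg using 2 <;> ring

end ImprovedBernoulli

lemma abs_rpow_le_mul_abs_div_rpow {a q : ℝ} (ha₀ : 0 < a) (ha₁ : a ≤ 1) (hq : 1 ≤ q) (x : ℝ) :
    |x| ^ q ≤ a * |x / a| ^ q := by
  calc |x| ^ q = a ^ q * |x / a| ^ q := by
        rw [← Real.mul_rpow ha₀.le (abs_nonneg _), abs_div, abs_of_pos ha₀,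
          mul_div_cancel₀ _ ha₀.ne']
    _ ≤ a * |x / a| ^ q := by
        gcongr
        exact Real.rpow_le_self_of_le_one ha₀.le ha₁ hq

theorem action_increase_ineq_out_general {a b q x : ℝ} (ha₀ : 0 < a) (ha₁ : a ≤ 1) (hb : 0 < b)
    (hq : q ∈ Set.Icc 1 2) (hx : a ≤ |x|) :
    (q - 1) * |x| ^ q / 3 ≤ a * |x / a + 1| ^ q + b * |x / b - 1| ^ q - (a + b) := by
  obtain ⟨hq₁, hq₂⟩ := hq
  have one_le_abs_div : 1 ≤ |x / a| := by rwa [abs_div, abs_of_pos ha₀, one_le_div ha₀]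
  have a_term : a + q * x + (q - 1) / 3 * |x| ^ q ≤ a * |x / a + 1| ^ q := by
    calc a + q * x + (q - 1) / 3 * |x| ^ q
        ≤ a + q * x + (q - 1) / 3 * (a * |x / a| ^ q) := by
          have : 0 ≤ q - 1 := sub_nonneg.2 hq₁
          gcongr
          exact abs_rpow_le_mul_abs_div_rpow ha₀ ha₁ hq₁ x
      _ = a * (1 + q * (x / a) + (q - 1) / 3 * |x / a| ^ q) := by field_simp
      _ ≤ a * |x / a + 1| ^ q := by
          rw [add_comm (x / a)]
          gcongr
          exact one_add_mul_add_abs_rpow_le_abs_one_add_rpow hq₁ hq₂ one_le_abs_div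
  have b_term : b - q * x ≤ b * |x / b - 1| ^ q := sub_mul_le_mul_abs_div_sub_one_rpow hq₁ hb x
  linarith

/-- For `0 < a ≤ b < 1` with `a + b ≤ 1`, `q ∈ (1,2)` and `|x| ≥ a`:
`a·|x/a + 1|^q + b·|x/b − 1|^q − (a + b) ≥ (q − 1)·|x|^q / 3`. -/
theorem action_increase_ineq_out (a b q x : ℝ) (ha : 0 < a) (hab : a ≤ b) (hb : b < 1)
    (hab1 : a + b ≤ 1) (hq : q ∈ Set.Ioo (1:ℝ) 2) (hx : a ≤ |x|) :
    (q - 1) * |x| ^ q / 3 ≤ a * |x / a + 1| ^ q + b * |x / b - 1| ^ q - (a + b) :=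
  action_increase_ineq_out_general ha (by linarith) (by linarith) (Set.Ioo_subset_Icc_self hq) hx
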